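/- Let n ≥ 2, r > 0, and let E ⊆ ℝⁿ be a nonempty compact set contained in the closed ball B̄_r of radius r centered at the origin. Suppose there exists a nonempty relatively open subset U of the sphere ∂B̄_r = {x : |x| = r} with U ∩ E = ∅. Then there exist finitely many unit vectors v_1, …, v_m such that max_{x ∈ S_{v_m}⋯S_{v_1}E} |x| < r. -/

import Mathlib

open MeasureTheory Filter Metric

/-- Orthogonal projection of `ℝⁿ` onto the hyperplane `u^⊥` through the origin. -/
noncomputable def steinerProj {n : ℕ} (u : EuclideanSpace ℝ (Fin n)) :
    EuclideanSpace ℝ (Fin n) → EuclideanSpace ℝ (Fin n) :=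
  fun z => ((Submodule.orthogonalProjectionOnto (Submodule.span ℝ {u})ᗮ) z : EuclideanSpace ℝ (Fin n))

/-- `ℓ_{E,u}(x')` : the one-dimensional Lebesgue measure of `{t : x' + t u ∈ E}`. -/
noncomputable def steinerLen {n : ℕ} (u : EuclideanSpace ℝ (Fin n))
    (E : Set (EuclideanSpace ℝ (Fin n))) (x' : EuclideanSpace ℝ (Fin n)) : ℝ :=
  (volume {t : ℝ | x' + t • u ∈ E}).toReal

/-- Steiner symmetrization of `E` about the hyperplane `u^⊥`:
`S_u E = {x' + t u : x' ∈ π_u(E), |t| ≤ ℓ_{E,u}(x')/2}`. -/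
noncomputable def steiner {n : ℕ} (u : EuclideanSpace ℝ (Fin n))
    (E : Set (EuclideanSpace ℝ (Fin n))) : Set (EuclideanSpace ℝ (Fin n)) :=
  {x | ∃ x' ∈ steinerProj u '' E, ∃ t : ℝ, |t| ≤ steinerLen u E x' / 2 ∧ x = x' + t • u}

/-- The last standard basis vector `e_n` of `ℝⁿ` (junk value `0` if `n = 0`). -/
noncomputable def lastDir (n : ℕ) : EuclideanSpace ℝ (Fin n) :=
  if h : n = 0 then 0
  else EuclideanSpace.single ⟨n - 1, Nat.sub_lt (Nat.pos_of_ne_zero h) one_pos⟩ 1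

/-- `max_{x ∈ E} |x|` for a (nonempty compact) set `E ⊆ ℝⁿ`. -/
noncomputable def maxNorm {n : ℕ} (E : Set (EuclideanSpace ℝ (Fin n))) : ℝ :=
  sSup ((fun x => ‖x‖) '' E)

section SteinerLemmas

variable {n : ℕ} {u : EuclideanSpace ℝ (Fin n)} {E : Set (EuclideanSpace ℝ (Fin n))} {r : ℝ}

theorem steinerProj_eq (hu : ‖u‖ = 1) (x : EuclideanSpace ℝ (Fin n)) :
    steinerProj u x = x - inner ℝ u x • u := by
  rw [steinerProj, Submodule.coe_orthogonalProjectionOnto_apply,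
    Submodule.starProjection_orthogonal_val, Submodule.starProjection_unit_singleton ℝ hu]

theorem steinerProj_add_smul (hu : ‖u‖ = 1) (x : EuclideanSpace ℝ (Fin n)) :
    steinerProj u x + inner ℝ u x • u = x := by
  rw [steinerProj_eq hu, sub_add_cancel]

theorem inner_steinerProj (hu : ‖u‖ = 1) (x : EuclideanSpace ℝ (Fin n)) :
    inner ℝ u (steinerProj u x) = 0 := by
  rw [steinerProj_eq hu, inner_sub_right, inner_smul_right, real_inner_self_eq_norm_sq, hu]
  ring

theorem steinerProj_steinerProj_add (hu : ‖u‖ = 1) (x : EuclideanSpace ℝ (Fin n)) (t : ℝ) :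
    steinerProj u (steinerProj u x + t • u) = steinerProj u x := by
  rw [steinerProj_eq hu (_ + _), inner_add_right, inner_steinerProj hu, inner_smul_right,
    real_inner_self_eq_norm_sq, hu]
  simp

theorem continuous_steinerProj (u : EuclideanSpace ℝ (Fin n)) : Continuous (steinerProj u) := by
  unfold steinerProj
  fun_prop

/-- Pythagoras along the line through `x` in direction `u`. -/
theorem norm_steinerProj_add_smul_sq (hu : ‖u‖ = 1) (x : EuclideanSpace ℝ (Fin n)) (t : ℝ) :
    ‖steinerProj u x + t • u‖ ^ 2 = ‖steinerProj u x‖ ^ 2 + t ^ 2 := by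
  rw [norm_add_sq_real, inner_smul_right, real_inner_comm, inner_steinerProj hu, norm_smul, hu]
  simp

theorem norm_sq_eq_steinerProj (hu : ‖u‖ = 1) (x : EuclideanSpace ℝ (Fin n)) :
    ‖x‖ ^ 2 = ‖steinerProj u x‖ ^ 2 + (inner ℝ u x) ^ 2 := by
  rw [← norm_steinerProj_add_smul_sq hu, steinerProj_add_smul hu]

theorem mem_steiner_iff (hu : ‖u‖ = 1) (x : EuclideanSpace ℝ (Fin n)) :
    x ∈ steiner u E ↔ steinerProj u x ∈ steinerProj u '' E ∧
      |inner ℝ u x| ≤ steinerLen u E (steinerProj u x) / 2 := by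
  constructor
  · rintro ⟨_, ⟨z, hz, rfl⟩, t, ht, rfl⟩
    rw [steinerProj_steinerProj_add hu, inner_add_right, inner_steinerProj hu, inner_smul_right,
      real_inner_self_eq_norm_sq, hu]
    exact ⟨⟨z, hz, rfl⟩, by simpa using ht⟩
  · rintro ⟨hx, ht⟩
    exact ⟨_, hx, _, ht, (steinerProj_add_smul hu x).symm⟩

/-- The fibre of a subset of the ball of radius `r` lies in the corresponding chord. -/
theorem sq_le_of_steinerProj_add_mem (hu : ‖u‖ = 1) (hE : E ⊆ closedBall 0 r)
    {x : EuclideanSpace ℝ (Fin n)} {t : ℝ} (ht : steinerProj u x + t • u ∈ E) :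
    ‖steinerProj u x‖ ^ 2 + t ^ 2 ≤ r ^ 2 := by
  rw [← norm_steinerProj_add_smul_sq hu]
  exact pow_le_pow_left₀ (norm_nonneg _) (mem_closedBall_zero_iff.1 (hE ht)) 2

theorem fibre_subset_Icc (hu : ‖u‖ = 1) (hE : E ⊆ closedBall 0 r)
    {x : EuclideanSpace ℝ (Fin n)} {a : ℝ} (ha : 0 ≤ a)
    (hxa : r ^ 2 ≤ ‖steinerProj u x‖ ^ 2 + a ^ 2) :
    {t : ℝ | steinerProj u x + t • u ∈ E} ⊆ Set.Icc (-a) a := fun t ht =>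
  abs_le.1 (abs_le_of_sq_le_sq (by linarith [sq_le_of_steinerProj_add_mem hu hE ht]) ha)

theorem steinerLen_le_of_subset_Icc {x : EuclideanSpace ℝ (Fin n)} {a : ℝ} (ha : 0 ≤ a)
    (h : {t : ℝ | x + t • u ∈ E} ⊆ Set.Icc (-a) a) : steinerLen u E x ≤ 2 * a := by
  have := measure_mono (μ := volume) h
  rw [Real.volume_Icc] at this
  exact ENNReal.toReal_le_of_le_ofReal (by positivity) (this.trans_eq (by ring_nf))

theorem steiner_subset_closedBall (hu : ‖u‖ = 1) (hr : 0 ≤ r) (hE : E ⊆ closedBall 0 r) :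
    steiner u E ⊆ closedBall 0 r := by
  intro x hx
  obtain ⟨⟨z, hz, hzx⟩, ht⟩ := (mem_steiner_iff hu x).1 hx
  have hz' := hz
  rw [← steinerProj_add_smul hu z, hzx] at hz'
  have hle := sq_le_of_steinerProj_add_mem hu hE hz'
  have hnn : 0 ≤ r ^ 2 - ‖steinerProj u x‖ ^ 2 := by nlinarith [sq_nonneg (inner ℝ u z)]
  have hlen := steinerLen_le_of_subset_Icc (Real.sqrt_nonneg _)
    (fibre_subset_Icc hu hE (x := x) (Real.sqrt_nonneg (r ^ 2 - ‖steinerProj u x‖ ^ 2))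
      (by rw [Real.sq_sqrt hnn]; linarith))
  have habs : |inner ℝ u x| ≤ √(r ^ 2 - ‖steinerProj u x‖ ^ 2) := by linarith
  have hsq : (inner ℝ u x) ^ 2 ≤ r ^ 2 - ‖steinerProj u x‖ ^ 2 := by
    rw [← Real.sq_sqrt hnn]
    exact sq_le_sq' (abs_le.1 habs).1 (abs_le.1 habs).2
  rw [mem_closedBall_zero_iff]
  exact (sq_le_sq₀ (norm_nonneg x) hr).1 (by linarith [norm_sq_eq_steinerProj hu x])

theorem isClosed_steiner (hu : ‖u‖ = 1) (hr : 0 ≤ r) (hE : IsClosed E)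
    (hEr : E ⊆ closedBall 0 r) : IsClosed (steiner u E) := by
  have hEc : IsCompact E := (isCompact_closedBall 0 r).of_isClosed_subset hE hEr
  have hproj := continuous_steinerProj u
  have hfib : ∀ x, {t : ℝ | steinerProj u x + t • u ∈ E} ⊆ Set.Icc (-r) r := fun x =>
    fibre_subset_Icc hu hEr hr (by nlinarith [sq_nonneg ‖steinerProj u x‖])
  have hset : steiner u E = steinerProj u ⁻¹' (steinerProj u '' E) ∩
      {x | |inner ℝ u x| ≤ steinerLen u E (steinerProj u x) / 2} :=
    Set.ext fun x => mem_steiner_iff hu x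
  rw [hset]
  refine ((hEc.image hproj).isClosed.preimage hproj).inter ?_
  rw [← isOpen_compl_iff, isOpen_iff_mem_nhds]
  intro x hx
  simp only [Set.mem_compl_iff, Set.mem_ofPred_eq, not_le] at hx
  have hfin : volume {t : ℝ | steinerProj u x + t • u ∈ E} ≠ ⊤ :=
    measure_ne_top_of_subset (hfib x) (by simp)
  have hlt : volume {t : ℝ | steinerProj u x + t • u ∈ E} <
      ENNReal.ofReal (2 * |inner ℝ u x|) := by
    rw [ENNReal.lt_ofReal_iff_toReal_lt hfin]
    unfold steinerLen at hx
    linarith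
  obtain ⟨W, hWsub, hWo, hWlt⟩ := Set.exists_isOpen_lt_of_lt _ _ hlt
  have hWfin : volume W ≠ ⊤ := hWlt.ne_top
  have hnear : ∀ᶠ y in nhds x, ∀ t ∈ Set.Icc (-r) r \ W, steinerProj u y + t • u ∉ E := by
    refine (isCompact_Icc.diff hWo).eventually_forall_of_forall_eventually fun t ht => ?_
    have hcont : Continuous fun z : EuclideanSpace ℝ (Fin n) × ℝ =>
        steinerProj u z.1 + z.2 • u := by fun_prop
    have hnot : steinerProj u x + t • u ∉ E := fun h => ht.2 (hWsub h)
    exact (hcont.tendsto (x, t)).eventually (hE.isOpen_compl.mem_nhds hnot)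
  have hht : ∀ᶠ y in nhds x, (volume W).toReal < 2 * |inner ℝ u y| := by
    have hcont : Continuous fun y : EuclideanSpace ℝ (Fin n) => 2 * |inner ℝ u y| := by fun_prop
    exact hcont.continuousAt.eventually
      (lt_mem_nhds ((ENNReal.lt_ofReal_iff_toReal_lt hWfin).1 hWlt))
  filter_upwards [hnear, hht] with y hy hyt
  simp only [Set.mem_compl_iff, Set.mem_ofPred_eq, not_le]
  have hsub : {t : ℝ | steinerProj u y + t • u ∈ E} ⊆ W := fun t ht => by
    by_contra hW
    exact hy t ⟨hfib y ht, hW⟩ ht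
  have := ENNReal.toReal_mono hWfin (measure_mono (μ := volume) hsub)
  unfold steinerLen
  linarith

/-- A closed subset of `[-a, a]` of full measure is the whole interval. -/
theorem Icc_subset_of_isClosed_of_volume_le {F : Set ℝ} {a : ℝ} (ha : 0 < a) (hF : IsClosed F)
    (hFa : F ⊆ Set.Icc (-a) a) (hvol : 2 * a ≤ (volume F).toReal) : Set.Icc (-a) a ⊆ F := by
  have hfin : volume F ≠ ⊤ := measure_ne_top_of_subset hFa (by simp)
  have hzero : volume (Set.Icc (-a) a \ F) = 0 := by
    rw [measure_sdiff hFa hF.measurableSet.nullMeasurableSet hfin, Real.volume_Icc,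
      tsub_eq_zero_iff_le]
    exact (ENNReal.ofReal_le_iff_le_toReal hfin).2 (by linarith)
  have hempty : Set.Ioo (-a) a \ F = ∅ :=
    ((isOpen_Ioo.sdiff hF).measure_eq_zero_iff volume).1
      (measure_mono_null (Set.sdiff_subset_sdiff_left Set.Ioo_subset_Icc_self) hzero)
  rw [← closure_Ioo (by linarith : -a ≠ a)]
  exact closure_minimal (Set.sdiff_eq_empty.1 hempty) hF

/-- If a point of the sphere belongs to `S_u E`, then it and its mirror image belong to `E`. -/
theorem mem_of_mem_steiner_of_norm_eq (hu : ‖u‖ = 1) (hE : IsClosed E)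
    (hEr : E ⊆ closedBall 0 r) {x : EuclideanSpace ℝ (Fin n)} (hxr : ‖x‖ = r)
    (hx : x ∈ steiner u E) : x ∈ E ∧ x - (2 * inner ℝ u x) • u ∈ E := by
  obtain ⟨⟨z, hz, hzx⟩, ht⟩ := (mem_steiner_iff hu x).1 hx
  have hz' := hz
  rw [← steinerProj_add_smul hu z, hzx] at hz'
  have hsub : {t : ℝ | steinerProj u x + t • u ∈ E} ⊆
      Set.Icc (-|inner ℝ u x|) |inner ℝ u x| :=
    fibre_subset_Icc hu hEr (abs_nonneg _) (by
      rw [sq_abs, ← norm_sq_eq_steinerProj hu, hxr])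
  have hfull : Set.Icc (-|inner ℝ u x|) |inner ℝ u x| ⊆
      {t : ℝ | steinerProj u x + t • u ∈ E} := by
    rcases (abs_nonneg (inner ℝ u x)).eq_or_lt with h0 | hpos
    · have hz0 := hsub hz'
      rw [← h0, neg_zero, Set.Icc_self, Set.mem_singleton_iff] at hz0
      rw [← h0, neg_zero, Set.Icc_self, Set.singleton_subset_iff]
      rwa [hz0] at hz'
    · refine Icc_subset_of_isClosed_of_volume_le hpos ?_ hsub ?_
      · exact hE.preimage (by fun_prop : Continuous fun t : ℝ => steinerProj u x + t • u)
      · unfold steinerLen at ht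
        linarith
  constructor
  · have := hfull ⟨neg_abs_le (inner ℝ u x), le_abs_self _⟩
    rwa [Set.mem_ofPred_eq, steinerProj_add_smul hu] at this
  · have : steinerProj u x + (-inner ℝ u x) • u ∈ E :=
      hfull ⟨neg_le_neg (le_abs_self (inner ℝ u x)), neg_le_abs _⟩
    convert this using 1
    rw [steinerProj_eq hu]
    module

theorem norm_sub_two_inner_smul (hu : ‖u‖ = 1) (x : EuclideanSpace ℝ (Fin n)) :
    ‖x - (2 * inner ℝ u x) • u‖ = ‖x‖ := by
  have h := norm_steinerProj_add_smul_sq hu x (-inner ℝ u x)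
  rw [neg_sq, ← norm_sq_eq_steinerProj hu] at h
  rw [← sq_eq_sq₀ (norm_nonneg _) (norm_nonneg _), ← h, steinerProj_eq hu]
  congr 2
  module

/-- Iterated symmetrizations of a closed subset of the ball stay closed and inside the ball, and
each point of the sphere that survives lies in `E` together with its mirror images. -/
theorem foldl_steiner_spec (hr : 0 ≤ r) (vs : List (EuclideanSpace ℝ (Fin n)))
    (hvs : ∀ v ∈ vs, ‖v‖ = 1) (E : Set (EuclideanSpace ℝ (Fin n))) (hE : IsClosed E)
    (hEr : E ⊆ closedBall 0 r) :
    IsClosed (vs.foldl (fun A v => steiner v A) E) ∧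
      vs.foldl (fun A v => steiner v A) E ⊆ closedBall 0 r ∧
      ∀ x ∈ vs.foldl (fun A v => steiner v A) E, ‖x‖ = r →
        x ∈ E ∧ ∀ v ∈ vs, x - (2 * inner ℝ v x) • v ∈ E := by
  induction vs generalizing E with
  | nil => exact ⟨hE, hEr, fun x hx _ => ⟨hx, by simp⟩⟩
  | cons w vs ih =>
    have hw : ‖w‖ = 1 := hvs w List.mem_cons_self
    have hvs' : ∀ v ∈ vs, ‖v‖ = 1 := fun v hv => hvs v (List.mem_cons_of_mem w hv)
    obtain ⟨hcl, hsub, hsphere⟩ := ih hvs' (steiner w E) (isClosed_steiner hw hr hE hEr)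
      (steiner_subset_closedBall hw hr hEr)
    refine ⟨hcl, hsub, fun x hx hxr => ?_⟩
    obtain ⟨hxw, hxv⟩ := hsphere x hx hxr
    have hmem := mem_of_mem_steiner_of_norm_eq hw hE hEr hxr hxw
    refine ⟨hmem.1, fun v hv => ?_⟩
    rcases List.mem_cons.1 hv with rfl | hv
    · exact hmem.2
    · exact (mem_of_mem_steiner_of_norm_eq hw hE hEr
        ((norm_sub_two_inner_smul (hvs' v hv) x).trans hxr) (hxv v hv)).1

/-- Two distinct points of equal norm are exchanged by a reflection. -/
theorem exists_unit_reflection_eq {x y : EuclideanSpace ℝ (Fin n)} (hxy : ‖x‖ = ‖y‖)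
    (hne : x ≠ y) : ∃ v : EuclideanSpace ℝ (Fin n), ‖v‖ = 1 ∧ x - (2 * inner ℝ v x) • v = y := by
  have hd : ‖x - y‖ ≠ 0 := norm_ne_zero_iff.2 (sub_ne_zero.2 hne)
  refine ⟨‖x - y‖⁻¹ • (x - y), by rw [norm_smul, norm_inv, norm_norm, inv_mul_cancel₀ hd], ?_⟩
  have hinner : 2 * inner ℝ (x - y) x = ‖x - y‖ ^ 2 := by
    rw [norm_sub_sq_real, inner_sub_left, real_inner_self_eq_norm_sq, real_inner_comm, ← hxy]
    ring
  rw [real_inner_smul_left, smul_smul]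
  have hcoef : 2 * (‖x - y‖⁻¹ * inner ℝ (x - y) x) * ‖x - y‖⁻¹ = 1 := by
    field_simp
    linarith
  rw [hcoef, one_smul, sub_sub_cancel]

/-- Finitely many mirror images of a relatively open piece of the sphere cover the sphere. -/
theorem exists_list_reflection_cover {V : Set (EuclideanSpace ℝ (Fin n))} (hV : IsOpen V)
    {x₀ : EuclideanSpace ℝ (Fin n)} (hx₀ : x₀ ∈ V) (hx₀r : ‖x₀‖ = r) :
    ∃ vs : List (EuclideanSpace ℝ (Fin n)), (∀ v ∈ vs, ‖v‖ = 1) ∧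
      ∀ y ∈ sphere (0 : EuclideanSpace ℝ (Fin n)) r,
        y ∈ V ∨ ∃ v ∈ vs, y - (2 * inner ℝ v y) • v ∈ V := by
  refine (isCompact_sphere (0 : EuclideanSpace ℝ (Fin n)) r).induction_on
    (p := fun s => ∃ vs : List (EuclideanSpace ℝ (Fin n)), (∀ v ∈ vs, ‖v‖ = 1) ∧
      ∀ y ∈ s, y ∈ V ∨ ∃ v ∈ vs, y - (2 * inner ℝ v y) • v ∈ V) ⟨[], by simp⟩ ?_ ?_ ?_
  · rintro s t hst ⟨vs, hvs, h⟩
    exact ⟨vs, hvs, fun y hy => h y (hst hy)⟩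
  · rintro s t ⟨vs, hvs, h⟩ ⟨ws, hws, h'⟩
    refine ⟨vs ++ ws, fun v hv => (List.mem_append.1 hv).elim (hvs v) (hws v), ?_⟩
    rintro y (hy | hy)
    · exact (h y hy).imp_right fun ⟨v, hv, hyv⟩ => ⟨v, List.mem_append_left ws hv, hyv⟩
    · exact (h' y hy).imp_right fun ⟨v, hv, hyv⟩ => ⟨v, List.mem_append_right vs hv, hyv⟩
  · intro y hy
    by_cases hyx : y = x₀
    · subst hyx
      exact ⟨V, mem_nhdsWithin_of_mem_nhds (hV.mem_nhds hx₀), [], by simp, fun _ => Or.inl⟩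
    · obtain ⟨v, hv, hvy⟩ :=
        exists_unit_reflection_eq ((mem_sphere_zero_iff_norm.1 hy).trans hx₀r.symm) hyx
      have hcont : Continuous fun z : EuclideanSpace ℝ (Fin n) =>
          z - (2 * inner ℝ v z) • v := by fun_prop
      refine ⟨(fun z => z - (2 * inner ℝ v z) • v) ⁻¹' V, mem_nhdsWithin_of_mem_nhds
        ((hV.preimage hcont).mem_nhds (by rwa [Set.mem_preimage, hvy])), [v], by simpa using hv, ?_⟩
      exact fun z hz => Or.inr ⟨v, List.mem_singleton_self v, hz⟩

theorem maxNorm_lt (hr : 0 < r) (hE : IsCompact E) (h : ∀ x ∈ E, ‖x‖ < r) : maxNorm E < r := by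
  rcases E.eq_empty_or_nonempty with rfl | hne
  · simpa [maxNorm] using hr
  · obtain ⟨x, hx, hmax⟩ := (hE.image continuous_norm).sSup_mem (hne.image _)
    have : maxNorm E = ‖x‖ := hmax.symm
    exact this ▸ h x hx

end SteinerLemmas

/-- If a nonempty compact set `E ⊆ B̄_r` misses a nonempty relatively open subset of the
sphere `∂B̄_r`, then finitely many Steiner symmetrizations strictly decrease the
circumscribed radius: `max_{x ∈ S_{v_m}⋯S_{v_1}E} |x| < r`. -/
theorem stmt10 (n : ℕ) (hn : 2 ≤ n) (r : ℝ) (hr : 0 < r)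
    (E : Set (EuclideanSpace ℝ (Fin n))) (hEne : E.Nonempty) (hE : IsCompact E)
    (hEsub : E ⊆ closedBall (0 : EuclideanSpace ℝ (Fin n)) r)
    (U : Set (EuclideanSpace ℝ (Fin n))) (hUne : U.Nonempty)
    (hUopen : ∃ V : Set (EuclideanSpace ℝ (Fin n)),
      IsOpen V ∧ U = V ∩ sphere (0 : EuclideanSpace ℝ (Fin n)) r)
    (hUE : U ∩ E = ∅) :
    ∃ vs : List (EuclideanSpace ℝ (Fin n)), (∀ v ∈ vs, ‖v‖ = 1) ∧
      maxNorm (vs.foldl (fun A v => steiner v A) E) < r := by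
  obtain ⟨V, hV, rfl⟩ := hUopen
  obtain ⟨x₀, hx₀V, hx₀r⟩ := hUne
  obtain ⟨vs, hvs, hcover⟩ :=
    exists_list_reflection_cover hV hx₀V (mem_sphere_zero_iff_norm.1 hx₀r)
  obtain ⟨hcl, hsub, hsphere⟩ := foldl_steiner_spec hr.le vs hvs E hE.isClosed hEsub
  refine ⟨vs, hvs, maxNorm_lt hr ((isCompact_closedBall 0 r).of_isClosed_subset hcl hsub) ?_⟩
  intro x hx
  refine lt_of_le_of_ne (mem_closedBall_zero_iff.1 (hsub hx)) fun hxr => ?_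
  have hmiss : ∀ y ∈ V, ‖y‖ = r → y ∉ E := fun y hyV hyr hyE =>
    (Set.eq_empty_iff_forall_notMem.1 hUE) y ⟨⟨hyV, mem_sphere_zero_iff_norm.2 hyr⟩, hyE⟩
  obtain ⟨hxE, hxvs⟩ := hsphere x hx hxr
  rcases hcover x (mem_sphere_zero_iff_norm.2 hxr) with hxV | ⟨v, hv, hxv⟩
  · exact hmiss x hxV hxr hxE
  · exact hmiss _ hxv ((norm_sub_two_inner_smul (hvs v hv) x).trans hxr) (hxvs v hv)
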